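/- arXiv:1207.3739 — 7 statements merged into one kernel-verified Lean document; each statement's English description precedes it below -/
import Mathlib

section
/- Let A be a finite-dimensional left Leibniz algebra and N a nilpotent ideal of A. Then A is nilpotent if and only if the quotient A/N² is nilpotent. -/
open Polynomial LinearMap

/-- A (left) Leibniz algebra structure on the `K`-vector space `A`:
a bilinear multiplication satisfying `x(yz) = (xy)z + y(xz)`. -/
structure LeibnizMul (K A : Type*) [Field K] [AddCommGroup A] [Module K A] where
  mul : A →ₗ[K] A →ₗ[K] A
  leibniz : ∀ x y z, mul x (mul y z) = mul (mul x y) z + mul y (mul x z)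

namespace LeibnizMul

variable {K A : Type*} [Field K] [AddCommGroup A] [Module K A]

/-- The product of two subspaces: the span of all products `s·t`, `s ∈ S`, `t ∈ T`. -/
def mulSub (m : LeibnizMul K A) (S T : Submodule K A) : Submodule K A :=
  Submodule.span K (Set.image2 (fun x y => m.mul x y) (S : Set A) (T : Set A))

/-- Relative lower central series of the subalgebra `S`: `lcsIn m S n = S^(n+1)`,
i.e. `lcsIn m S 0 = S` and `lcsIn m S (n+1) = S · (lcsIn m S n)`. -/
def lcsIn (m : LeibnizMul K A) (S : Submodule K A) : ℕ → Submodule K A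
  | 0 => S
  | (n+1) => m.mulSub S (m.lcsIn S n)

/-- `A` is nilpotent: some term of the lower central series vanishes. -/
def IsNilpotent (m : LeibnizMul K A) : Prop := ∃ n, m.lcsIn ⊤ n = ⊥

/-- `S` is a subalgebra: a subspace closed under multiplication. -/
def IsSubalg (m : LeibnizMul K A) (S : Submodule K A) : Prop :=
  ∀ x ∈ S, ∀ y ∈ S, m.mul x y ∈ S

/-- `S` is a (two-sided) ideal. -/
def IsIdeal (m : LeibnizMul K A) (S : Submodule K A) : Prop :=
  ∀ (x : A), ∀ y ∈ S, m.mul x y ∈ S ∧ m.mul y x ∈ S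

/-- `M` is a maximal (proper) subalgebra. -/
def IsMaxSubalg (m : LeibnizMul K A) (M : Submodule K A) : Prop :=
  m.IsSubalg M ∧ M ≠ ⊤ ∧ ∀ S, m.IsSubalg S → M < S → S = ⊤

/-- The Frattini subalgebra: the intersection of all maximal subalgebras. -/
def frattini (m : LeibnizMul K A) : Submodule K A :=
  sInf {M | m.IsMaxSubalg M}

/-- The subalgebra generated by a single element `a`. -/
def subalgGen (m : LeibnizMul K A) (a : A) : Submodule K A :=
  sInf {S | m.IsSubalg S ∧ a ∈ S}

/-- The normal closure of a subspace: the smallest ideal containing it. -/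
def normalClosure (m : LeibnizMul K A) (S : Submodule K A) : Submodule K A :=
  sInf {I | m.IsIdeal I ∧ S ≤ I}

/-- The normalizer of a subspace `C`: all `x` with `x·c ∈ C` and `c·x ∈ C` for all `c ∈ C`. -/
def normalizer (m : LeibnizMul K A) (C : Submodule K A) : Submodule K A :=
  ⨅ c : C, (Submodule.comap (m.mul.flip (c : A)) C ⊓ Submodule.comap (m.mul (c : A)) C)

/-- The center of the subalgebra `S`: all `z ∈ S` with `z·x = x·z = 0` for all `x ∈ S`. -/
def centerIn (m : LeibnizMul K A) (S : Submodule K A) : Submodule K A :=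
  S ⊓ ⨅ x : S, (LinearMap.ker (m.mul.flip (x : A)) ⊓ LinearMap.ker (m.mul (x : A)))

/-- All `z ∈ S` with `z·x ∈ T` and `x·z ∈ T` for all `x ∈ S`. -/
def relCentralizer (m : LeibnizMul K A) (S T : Submodule K A) : Submodule K A :=
  S ⊓ ⨅ x : S, (Submodule.comap (m.mul.flip (x : A)) T ⊓ Submodule.comap (m.mul (x : A)) T)

/-- The upper central series of the subalgebra `S`:
`Z₀ = 0`, `Z_{j+1} = {z ∈ S : zS ⊆ Z_j and Sz ⊆ Z_j}`. -/
def ucsIn (m : LeibnizMul K A) (S : Submodule K A) : ℕ → Submodule K A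
  | 0 => ⊥
  | (j+1) => m.relCentralizer S (m.ucsIn S j)

/-- The right center `{r : A·r = 0}`. -/
def rightCenter (m : LeibnizMul K A) : Submodule K A := LinearMap.ker m.mul.flip

/-- Left-normed powers of `a`: `lpow m a k = a^(k+1)`. -/
def lpow (m : LeibnizMul K A) (a : A) : ℕ → A
  | 0 => a
  | (k+1) => m.mul a (m.lpow a k)

/-- The Fitting null component of left multiplication by `a`. -/
def fittingNull (m : LeibnizMul K A) (a : A) : Submodule K A :=
  ⨆ k, LinearMap.ker ((m.mul a) ^ k)

end LeibnizMul

namespace LeibnizMul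

variable {K A : Type*} [Field K] [AddCommGroup A] [Module K A] (m : LeibnizMul K A)

theorem mulSub_eq_map₂ (S T : Submodule K A) : m.mulSub S T = Submodule.map₂ m.mul S T :=
  (Submodule.map₂_eq_span_image2 _ _ _).symm

theorem mulSub_le {S T U : Submodule K A} :
    m.mulSub S T ≤ U ↔ ∀ x ∈ S, ∀ y ∈ T, m.mul x y ∈ U := by
  rw [mulSub_eq_map₂, Submodule.map₂_le]

theorem mul_mem_mulSub {S T : Submodule K A} {x y : A} (hx : x ∈ S) (hy : y ∈ T) :
    m.mul x y ∈ m.mulSub S T :=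
  Submodule.subset_span ⟨x, hx, y, hy, rfl⟩

theorem mulSub_mono {S S' T T' : Submodule K A} (hS : S ≤ S') (hT : T ≤ T') :
    m.mulSub S T ≤ m.mulSub S' T' :=
  m.mulSub_le.2 fun _ hx _ hy => m.mul_mem_mulSub (hS hx) (hT hy)

/-- Multiplication on the left by the whole algebra. -/
def leftMul (S : Submodule K A) : Submodule K A := m.mulSub ⊤ S

theorem leftMul_mono : Monotone m.leftMul := fun _ _ h => m.mulSub_mono le_rfl h

theorem iterate_leftMul_sup (n : ℕ) (S T : Submodule K A) :
    m.leftMul^[n] (S ⊔ T) = m.leftMul^[n] S ⊔ m.leftMul^[n] T := by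
  induction n generalizing S T with
  | zero => rfl
  | succ n ih =>
    simp only [Function.iterate_succ_apply]
    rw [← ih]
    simp only [leftMul, mulSub_eq_map₂, Submodule.map₂_sup_right]

theorem leftMul_mulSub_le (S T : Submodule K A) :
    m.leftMul (m.mulSub S T) ≤ m.mulSub (m.leftMul S) T ⊔ m.mulSub S (m.leftMul T) := by
  refine m.mulSub_le.2 fun x hx y hy => ?_
  suffices m.mulSub S T ≤
      (m.mulSub (m.leftMul S) T ⊔ m.mulSub S (m.leftMul T)).comap (m.mul x) from this hy
  refine m.mulSub_le.2 fun s hs t ht => ?_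
  rw [Submodule.mem_comap, m.leibniz]
  exact Submodule.add_mem_sup (m.mul_mem_mulSub (m.mul_mem_mulSub hx hs) ht)
    (m.mul_mem_mulSub hs (m.mul_mem_mulSub hx ht))

/-- The iterated Leibniz rule for products of subspaces. -/
theorem iterate_leftMul_mulSub_le {n : ℕ} {S T U : Submodule K A}
    (h : ∀ i j, i + j = n → m.mulSub (m.leftMul^[i] S) (m.leftMul^[j] T) ≤ U) :
    m.leftMul^[n] (m.mulSub S T) ≤ U := by
  induction n generalizing S T with
  | zero => exact h 0 0 rfl
  | succ n ih =>
    rw [Function.iterate_succ_apply]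
    refine (m.leftMul_mono.iterate n (m.leftMul_mulSub_le S T)).trans ?_
    rw [iterate_leftMul_sup]
    exact sup_le (ih fun i j hij => h (i + 1) j (by omega))
      (ih fun i j hij => h i (j + 1) (by omega))

theorem iterate_leftMul_le {S : Submodule K A} (h : m.leftMul S ≤ S) (n : ℕ) :
    m.leftMul^[n] S ≤ S := by
  induction n with
  | zero => exact le_rfl
  | succ n ih => exact (m.leftMul_mono.iterate n h).trans ih

theorem iterate_leftMul_le_of_le {S T : Submodule K A} {n i : ℕ} (hT : m.leftMul T ≤ T)
    (h : m.leftMul^[n] S ≤ T) (hi : n ≤ i) : m.leftMul^[i] S ≤ T := by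
  obtain ⟨j, rfl⟩ := Nat.exists_eq_add_of_le' hi
  rw [Function.iterate_add_apply]
  exact (m.leftMul_mono.iterate j h).trans (m.iterate_leftMul_le hT j)

theorem lcsIn_top_eq_iterate (n : ℕ) : m.lcsIn ⊤ n = m.leftMul^[n] ⊤ := by
  induction n with
  | zero => rfl
  | succ n ih => rw [Function.iterate_succ_apply', ← ih]; rfl

theorem leftMul_lcsIn_le {N : Submodule K A} (hN : m.leftMul N ≤ N) (k : ℕ) :
    m.leftMul (m.lcsIn N k) ≤ m.lcsIn N k := by
  induction k with
  | zero => exact hN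
  | succ k ih =>
    exact (m.leftMul_mulSub_le _ _).trans
      (sup_le (m.mulSub_mono hN le_rfl) (m.mulSub_mono le_rfl ih))

theorem mulSub_mulSub_lcsIn_le (N : Submodule K A) (k : ℕ) :
    m.mulSub (m.mulSub N N) (m.lcsIn N k) ≤ m.lcsIn N (k + 2) := by
  refine m.mulSub_le.2 fun x hx c hc => ?_
  suffices m.mulSub N N ≤ (m.lcsIn N (k + 2)).comap (m.mul.flip c) from this hx
  refine m.mulSub_le.2 fun a ha b hb => ?_
  rw [Submodule.mem_comap, LinearMap.flip_apply, eq_sub_of_add_eq (m.leibniz a b c).symm]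
  exact sub_mem (m.mul_mem_mulSub ha (m.mul_mem_mulSub hb hc))
    (m.mul_mem_mulSub hb (m.mul_mem_mulSub ha hc))

theorem exists_iterate_leftMul_lcsIn_le {N : Submodule K A} (hN : m.leftMul N ≤ N) {n : ℕ}
    (hn : m.leftMul^[n] N ≤ m.mulSub N N) (k : ℕ) :
    ∃ r, m.leftMul^[r] (m.lcsIn N k) ≤ m.lcsIn N (k + 1) := by
  induction k with
  | zero => exact ⟨n, hn⟩
  | succ k ih =>
    obtain ⟨r, hr⟩ := ih
    refine ⟨n + r, m.iterate_leftMul_mulSub_le fun i j hij => ?_⟩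
    rcases le_or_gt n i with hi | hi
    · exact (m.mulSub_mono (m.iterate_leftMul_le_of_le (m.leftMul_lcsIn_le hN 1) hn hi)
        (m.iterate_leftMul_le (m.leftMul_lcsIn_le hN k) j)).trans (m.mulSub_mulSub_lcsIn_le N k)
    · exact m.mulSub_mono (m.iterate_leftMul_le hN i)
        (m.iterate_leftMul_le_of_le (m.leftMul_lcsIn_le hN (k + 1)) hr (by omega))

end LeibnizMul

/-- `A` nilpotent iff `A/N²` nilpotent.  Nilpotency of the quotient `A/N²`
is expressed equivalently by: some term of the lower central series of `A` lies in `N²`. -/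
theorem stmt0 {K A : Type*} [Field K] [AddCommGroup A] [Module K A] [FiniteDimensional K A]
    (m : LeibnizMul K A) (N : Submodule K A) (hN : m.IsIdeal N)
    (hNnil : ∃ n, m.lcsIn N n = ⊥) :
    m.IsNilpotent ↔ ∃ n, m.lcsIn ⊤ n ≤ m.mulSub N N := by
  refine ⟨fun ⟨n, hn⟩ => ⟨n, hn ▸ bot_le⟩, fun ⟨n, hn⟩ => ?_⟩
  have hinv : m.leftMul N ≤ N := m.mulSub_le.2 fun x _ y hy => (hN x y hy).1
  rw [m.lcsIn_top_eq_iterate] at hn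
  have key : ∀ k, ∃ s, m.leftMul^[s] ⊤ ≤ m.lcsIn N k := by
    intro k
    induction k with
    | zero => exact ⟨n, hn.trans ((m.mulSub_mono le_top le_rfl).trans hinv)⟩
    | succ k ih =>
      obtain ⟨s, hs⟩ := ih
      obtain ⟨r, hr⟩ := m.exists_iterate_leftMul_lcsIn_le hinv
        ((m.leftMul_mono.iterate n le_top).trans hn) k
      refine ⟨r + s, ?_⟩
      rw [Function.iterate_add_apply]
      exact (m.leftMul_mono.iterate r hs).trans hr
  obtain ⟨c, hc⟩ := hNnil
  obtain ⟨s, hs⟩ := key c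
  exact ⟨s, by rw [m.lcsIn_top_eq_iterate, ← le_bot_iff, ← hc]; exact hs⟩
end

section
/- There exists a 2-dimensional left Leibniz algebra A that is not nilpotent but contains a unique nonzero nilpotent subalgebra H whose normal closure (smallest ideal of A containing H) equals A. Concretely, A has basis {a, b} with a·a = b, a·b = b, and all other products zero; then H = span{a − b} is this unique subalgebra. -/
open Polynomial LinearMap

/-- The 2-dimensional Leibniz algebra on `K × K` with basis `a = (1,0)`, `b = (0,1)`,
multiplication `a·a = b`, `a·b = b`, all other products zero:
`(x₁,x₂)·(y₁,y₂) = (0, x₁y₁ + x₁y₂)`. -/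
def ex3 (K : Type*) [Field K] : LeibnizMul K (K × K) where
  mul := LinearMap.mk₂ K (fun x y => (0, x.1 * y.1 + x.1 * y.2))
    (by intro x x' y; apply Prod.ext <;> simp <;> ring)
    (by intro c x y; apply Prod.ext <;> simp <;> ring)
    (by intro x y y'; apply Prod.ext <;> simp <;> ring)
    (by intro c x y; apply Prod.ext <;> simp <;> ring)
  leibniz := by intro x y z; apply Prod.ext <;> simp <;> ring

theorem ex3_mul_apply {K : Type*} [Field K] (x y : K × K) :
    (ex3 K).mul x y = (0, x.1 * y.1 + x.1 * y.2) := rfl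

theorem zero_one_mem_of_snd_ne_zero {K : Type*} [Field K] {S : Submodule K (K × K)} {t : K}
    (ht : t ≠ 0) (h : ((0 : K), t) ∈ S) : ((0 : K), (1 : K)) ∈ S := by
  simpa [ht] using S.smul_mem t⁻¹ h

theorem ex3_zero_one_mem_lcsIn {K : Type*} [Field K] {S : Submodule K (K × K)} {x : K × K}
    (hx : x ∈ S) (hx1 : x.1 ≠ 0) (hb : ((0 : K), (1 : K)) ∈ S) (n : ℕ) :
    ((0 : K), (1 : K)) ∈ (ex3 K).lcsIn S n := by
  induction n with
  | zero => exact hb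
  | succ n ih =>
    refine zero_one_mem_of_snd_ne_zero hx1 (Submodule.subset_span ⟨x, hx, (0, 1), ih, ?_⟩)
    simp [ex3_mul_apply]

theorem ex3_lcsIn_ne_bot {K : Type*} [Field K] {S : Submodule K (K × K)} {x : K × K}
    (hx : x ∈ S) (hx1 : x.1 ≠ 0) (hb : ((0 : K), (1 : K)) ∈ S) (n : ℕ) :
    (ex3 K).lcsIn S n ≠ ⊥ := by
  intro h
  have hmem := ex3_zero_one_mem_lcsIn hx hx1 hb n
  simp [h] at hmem

theorem mem_span_one_neg_one {K : Type*} [Field K] {x : K × K} :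
    x ∈ Submodule.span K {((1 : K), (-1 : K))} ↔ x.1 + x.2 = 0 := by
  rw [Submodule.mem_span_singleton]
  constructor
  · rintro ⟨c, rfl⟩
    simp
  · intro h
    exact ⟨x.1, Prod.ext (by simp) (by simpa using (eq_neg_of_add_eq_zero_right h).symm)⟩

theorem ex3_exists_fst_ne_zero {K : Type*} [Field K] {H : Submodule K (K × K)}
    (h : (ex3 K).normalClosure H = ⊤) : ∃ x ∈ H, x.1 ≠ 0 := by
  by_contra! hH
  have hle : (ex3 K).normalClosure H ≤ LinearMap.ker (LinearMap.fst K K K) :=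
    sInf_le ⟨fun x y hy => by simp_all [ex3_mul_apply], fun x hx => by simpa using hH x hx⟩
  have hmem : ((1 : K), (0 : K)) ∈ LinearMap.ker (LinearMap.fst K K K) :=
    hle (h ▸ Submodule.mem_top)
  simp at hmem

theorem ex3_normalClosure_span (K : Type*) [Field K] :
    (ex3 K).normalClosure (Submodule.span K {((1 : K), (-1 : K))}) = ⊤ := by
  refine sInf_eq_top.2 ?_
  rintro I ⟨hI, hle⟩
  have ha : ((1 : K), (-1 : K)) ∈ I := hle (Submodule.mem_span_singleton_self _)
  have hb : ((0 : K), (1 : K)) ∈ I := by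
    simpa [ex3_mul_apply] using (hI (1, 0) _ ha).2
  refine eq_top_iff.2 fun x _ => ?_
  have hx := I.add_mem (I.smul_mem x.1 ha) (I.smul_mem (x.1 + x.2) hb)
  simpa using hx

theorem ex3_mul_eq_zero {K : Type*} [Field K] (x : K × K) {y : K × K}
    (hy : y ∈ Submodule.span K {((1 : K), (-1 : K))}) : (ex3 K).mul x y = 0 := by
  rw [ex3_mul_apply, ← mul_add, mem_span_one_neg_one.1 hy, mul_zero, Prod.mk_zero_zero]

theorem ex3_lcsIn_span_one (K : Type*) [Field K] :
    (ex3 K).lcsIn (Submodule.span K {((1 : K), (-1 : K))}) 1 = ⊥ := by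
  refine Submodule.span_eq_bot.2 ?_
  rintro _ ⟨x, -, y, hy, rfl⟩
  exact ex3_mul_eq_zero x hy

theorem ex3_eq_span {K : Type*} [Field K] {H : Submodule K (K × K)}
    (hsub : (ex3 K).IsSubalg H) (hnil : ∃ n, (ex3 K).lcsIn H n = ⊥)
    (htop : (ex3 K).normalClosure H = ⊤) :
    H = Submodule.span K {((1 : K), (-1 : K))} := by
  obtain ⟨n, hn⟩ := hnil
  obtain ⟨x, hx, hx1⟩ := ex3_exists_fst_ne_zero htop
  have hb : ((0 : K), (1 : K)) ∉ H := fun hb => ex3_lcsIn_ne_bot hx hx1 hb n hn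
  have hsum : ∀ y ∈ H, y.1 + y.2 = 0 := by
    intro y hy
    by_contra hne
    refine hb (zero_one_mem_of_snd_ne_zero (mul_ne_zero hx1 hne) ?_)
    simpa [ex3_mul_apply, mul_add] using hsub x hx y hy
  refine le_antisymm (fun y hy => mem_span_one_neg_one.2 (hsum y hy)) ?_
  rw [Submodule.span_singleton_le_iff_mem]
  have hx2 : x.2 = -x.1 := eq_neg_of_add_eq_zero_right (hsum x hx)
  have hsmul : x.1⁻¹ • x = (1, -1) := by ext <;> simp [hx2, hx1]
  exact hsmul ▸ H.smul_mem x.1⁻¹ hx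

/-- the algebra `ex3 K` is 2-dimensional, has `a·a = b`, `a·b = b`,
`b·a = 0`, `b·b = 0`, is not nilpotent, yet `H = span{a − b}` is the unique nonzero
nilpotent subalgebra whose normal closure equals the whole algebra. -/
theorem stmt3 (K : Type*) [Field K] :
    Module.finrank K (K × K) = 2 ∧
    (ex3 K).mul (1, 0) (1, 0) = ((0 : K), (1 : K)) ∧
    (ex3 K).mul (1, 0) (0, 1) = ((0 : K), (1 : K)) ∧
    (ex3 K).mul (0, 1) (1, 0) = ((0 : K), (0 : K)) ∧
    (ex3 K).mul (0, 1) (0, 1) = ((0 : K), (0 : K)) ∧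
    ¬ (ex3 K).IsNilpotent ∧
    (let P : Submodule K (K × K) → Prop := fun H =>
      H ≠ ⊥ ∧ (ex3 K).IsSubalg H ∧ (∃ n, (ex3 K).lcsIn H n = ⊥) ∧
        (ex3 K).normalClosure H = ⊤
    P (Submodule.span K {((1 : K), (-1 : K))}) ∧
      ∀ H, P H → H = Submodule.span K {((1 : K), (-1 : K))}) := by
  refine ⟨by simp, by simp [ex3_mul_apply], by simp [ex3_mul_apply], by simp [ex3_mul_apply],
    by simp [ex3_mul_apply], ?_, ⟨by simp, ?_, ⟨1, ex3_lcsIn_span_one K⟩,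
      ex3_normalClosure_span K⟩, fun H hH => ex3_eq_span hH.2.1 hH.2.2.1 hH.2.2.2⟩
  · rintro ⟨n, hn⟩
    exact ex3_lcsIn_ne_bot (x := (1, 0)) Submodule.mem_top one_ne_zero Submodule.mem_top n hn
  · intro x _ y hy
    rw [ex3_mul_eq_zero x hy]
    exact Submodule.zero_mem _
end

section
/- Let A be an n-dimensional cyclic left Leibniz algebra generated by a, with a·aⁿ = α₂a² + ... + αₙaⁿ, and let p(x) = xⁿ − αₙx^{n−1} − ... − α₂x = p₁(x)^{n₁}···p_s(x)^{n_s} be the factorization into distinct irreducible factors of the characteristic polynomial of left multiplication L_a. Then the Frattini subalgebra of A equals {b ∈ A : q(L_a)(b) = 0}, where q(x) = p₁(x)^{n₁−1}···p_s(x)^{n_s−1}. -/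
open Polynomial LinearMap

namespace LeibnizMul

variable {K A : Type*} [Field K] [AddCommGroup A] [Module K A]

/-- Evaluation of polynomials in left multiplication by `a` at the element `a`. -/
noncomputable def polyEval (m : LeibnizMul K A) (a : A) : K[X] →ₗ[K] A :=
  (LinearMap.applyₗ a).comp (aeval (m.mul a)).toLinearMap

theorem polyEval_apply (m : LeibnizMul K A) (a : A) (f : K[X]) :
    m.polyEval a f = aeval (m.mul a) f a := rfl

theorem polyEval_mul (m : LeibnizMul K A) (a : A) (f g : K[X]) :
    m.polyEval a (f * g) = aeval (m.mul a) f (m.polyEval a g) := by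
  simp [polyEval_apply]

theorem mul_mul_eq_zero (m : LeibnizMul K A) {a b : A}
    (hb : ∃ c : K, m.mul b = c • m.mul a) : m.mul (m.mul a b) = 0 := by
  obtain ⟨c, hc⟩ := hb
  ext z
  have h := m.leibniz a b z
  simp only [hc, LinearMap.smul_apply, map_smul] at h
  simpa using h

theorem exists_mul_polyEval (m : LeibnizMul K A) (a : A) (f : K[X]) :
    ∃ c : K, m.mul (m.polyEval a f) = c • m.mul a := by
  induction f using Polynomial.induction_on' with
  | add f g hf hg =>
    obtain ⟨c, hc⟩ := hf
    obtain ⟨d, hd⟩ := hg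
    exact ⟨c + d, by rw [map_add, map_add, hc, hd, add_smul]⟩
  | monomial k r =>
    have key : ∀ k : ℕ, ∃ c : K, m.mul (m.polyEval a (X ^ k)) = c • m.mul a := by
      intro k
      induction k with
      | zero => exact ⟨1, by simp [polyEval_apply]⟩
      | succ k ih =>
        refine ⟨0, ?_⟩
        rw [pow_succ', polyEval_mul, aeval_X, mul_mul_eq_zero m ih, zero_smul]
    obtain ⟨c, hc⟩ := key k
    exact ⟨r * c, by rw [← smul_X_eq_monomial, map_smul, map_smul, hc, smul_smul]⟩

theorem polyEval_surjective (m : LeibnizMul K A) {a : A} (hcyc : m.subalgGen a = ⊤) :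
    Function.Surjective (m.polyEval a) := by
  rw [← LinearMap.range_eq_top, ← top_le_iff, ← hcyc]
  refine sInf_le ⟨?_, 1, by simp [polyEval_apply]⟩
  rintro _ ⟨f, rfl⟩ _ ⟨g, rfl⟩
  obtain ⟨c, hc⟩ := m.exists_mul_polyEval a f
  exact ⟨c • (X * g), by rw [map_smul, polyEval_mul, aeval_X, hc, LinearMap.smul_apply]⟩

theorem exists_mul_eq_smul (m : LeibnizMul K A) {a : A} (hcyc : m.subalgGen a = ⊤) (b : A) :
    ∃ c : K, m.mul b = c • m.mul a := by
  obtain ⟨f, rfl⟩ := m.polyEval_surjective hcyc b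
  exact m.exists_mul_polyEval a f

theorem polyEval_eq_zero_iff [FiniteDimensional K A] (m : LeibnizMul K A) {a : A}
    (hcyc : m.subalgGen a = ⊤) (f : K[X]) :
    m.polyEval a f = 0 ↔ (m.mul a).charpoly ∣ f := by
  set P := (m.mul a).charpoly with hP
  have hmon : P.Monic := LinearMap.charpoly_monic _
  have hdvd : ∀ g, P ∣ g → m.polyEval a g = 0 := by
    rintro _ ⟨g, rfl⟩
    rw [polyEval_mul, hP, LinearMap.aeval_self_charpoly, LinearMap.zero_apply]
  refine ⟨fun hf => ?_, hdvd f⟩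
  have hmod : ∀ g, m.polyEval a (g %ₘ P) = m.polyEval a g := fun g => by
    conv_rhs => rw [← modByMonic_add_div g P]
    rw [map_add, hdvd _ (dvd_mul_right _ _), add_zero]
  have hdeg : ∀ g, g %ₘ P ∈ degreeLT K (Module.finrank K A) := fun g => by
    rw [mem_degreeLT, ← LinearMap.charpoly_natDegree (m.mul a),
      ← degree_eq_natDegree hmon.ne_zero]
    exact degree_modByMonic_lt g hmon
  let ψ := (m.polyEval a).domRestrict (degreeLT K (Module.finrank K A))
  have hψ : Function.Surjective ψ := fun b => by
    obtain ⟨g, rfl⟩ := m.polyEval_surjective hcyc b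
    exact ⟨⟨g %ₘ P, hdeg g⟩, hmod g⟩
  have : FiniteDimensional K (degreeLT K (Module.finrank K A)) :=
    Module.Finite.equiv (degreeLTEquiv K _).symm
  have hfin : Module.finrank K (degreeLT K (Module.finrank K A)) = Module.finrank K A := by
    rw [(degreeLTEquiv K _).finrank_eq, Module.finrank_fin_fun]
  have hinj := (LinearMap.injective_iff_surjective_of_finrank_eq_finrank hfin).2 hψ
  have h0 : ψ ⟨f %ₘ P, hdeg f⟩ = 0 := (hmod f).trans hf
  rw [← modByMonic_eq_zero_iff_dvd hmon]
  exact congrArg Subtype.val ((map_eq_zero_iff ψ hinj).1 h0)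

theorem isSubalg_of_invariant (m : LeibnizMul K A) {a : A} (hcyc : m.subalgGen a = ⊤)
    {M : Submodule K A} (hM : ∀ x ∈ M, m.mul a x ∈ M) : m.IsSubalg M := by
  intro x _ y hy
  obtain ⟨c, hc⟩ := m.exists_mul_eq_smul hcyc x
  rw [hc]
  exact M.smul_mem c (hM y hy)

theorem ker_mul_invariant (m : LeibnizMul K A) {a : A} (hcyc : m.subalgGen a = ⊤) :
    ∀ x ∈ LinearMap.ker m.mul, m.mul a x ∈ LinearMap.ker m.mul := fun x _ =>
  LinearMap.mem_ker.2 (m.mul_mul_eq_zero (m.exists_mul_eq_smul hcyc x))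

/-- A subalgebra of a cyclic Leibniz algebra which is not properly contained in the proper
subalgebra of elements acting trivially from the left is invariant under `L_a`. -/
theorem IsSubalg.invariant (m : LeibnizMul K A) {a : A} (hcyc : m.subalgGen a = ⊤)
    {M : Submodule K A} (hM : m.IsSubalg M)
    (hker : M < LinearMap.ker m.mul → LinearMap.ker m.mul = ⊤) :
    ∀ x ∈ M, m.mul a x ∈ M := by
  by_cases hle : M ≤ LinearMap.ker m.mul
  · rcases hle.eq_or_lt with h | h
    · rw [h]
      exact m.ker_mul_invariant hcyc
    · intro x _
      have ha : a ∈ LinearMap.ker m.mul := hker h ▸ Submodule.mem_top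
      rw [LinearMap.mem_ker.1 ha]
      exact M.zero_mem
  · obtain ⟨b, hbM, hb⟩ := Set.not_subset.1 hle
    obtain ⟨c, hc⟩ := m.exists_mul_eq_smul hcyc b
    have hc0 : c ≠ 0 := by
      rintro rfl
      exact hb (LinearMap.mem_ker.2 (by rw [hc, zero_smul]))
    intro x hx
    have := hM b hbM x hx
    rwa [hc, LinearMap.smul_apply, M.smul_mem_iff hc0] at this

theorem aeval_mem_of_invariant {L : A →ₗ[K] A} {M : Submodule K A} (hM : ∀ x ∈ M, L x ∈ M)
    (f : K[X]) : ∀ x ∈ M, aeval L f x ∈ M := by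
  induction f using Polynomial.induction_on with
  | C r => intro x hx; simpa using M.smul_mem r hx
  | add f g hf hg => intro x hx; simpa using M.add_mem (hf x hx) (hg x hx)
  | monomial n r h =>
    intro x hx
    rw [pow_succ, ← mul_assoc, map_mul, aeval_X]
    exact h _ (hM x hx)

/-- The ideal of polynomials whose value at the generator lies in an invariant subspace. -/
noncomputable def evalIdeal (m : LeibnizMul K A) (a : A) (M : Submodule K A)
    (hM : ∀ x ∈ M, m.mul a x ∈ M) : Ideal K[X] where
  carrier := {f | m.polyEval a f ∈ M}
  add_mem' hf hg := by simpa using M.add_mem hf hg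
  zero_mem' := by simp
  smul_mem' f g hg := by
    simpa only [smul_eq_mul, Set.mem_ofPred_eq, polyEval_mul] using aeval_mem_of_invariant hM f _ hg

theorem mem_evalIdeal (m : LeibnizMul K A) (a : A) (M : Submodule K A)
    (hM : ∀ x ∈ M, m.mul a x ∈ M) (f : K[X]) :
    f ∈ m.evalIdeal a M hM ↔ m.polyEval a f ∈ M := Iff.rfl

theorem map_polyEval_invariant (m : LeibnizMul K A) (a : A) (J : Ideal K[X]) :
    ∀ x ∈ (J.restrictScalars K).map (m.polyEval a),
      m.mul a x ∈ (J.restrictScalars K).map (m.polyEval a) := by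
  rintro _ ⟨f, hf, rfl⟩
  exact ⟨X * f, J.mul_mem_left X hf, by rw [polyEval_mul, aeval_X]⟩

/-- The ideal of a maximal subalgebra of a cyclic Leibniz algebra is maximal. -/
theorem IsMaxSubalg.isMaximal_evalIdeal (m : LeibnizMul K A) {a : A}
    (hcyc : m.subalgGen a = ⊤) {M : Submodule K A} (hmax : m.IsMaxSubalg M)
    (hM : ∀ x ∈ M, m.mul a x ∈ M) : (m.evalIdeal a M hM).IsMaximal := by
  have hsurj := m.polyEval_surjective hcyc
  refine ⟨fun h => hmax.2.1 ?_, fun J hJ => ?_⟩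
  · rw [eq_top_iff]
    rintro b -
    obtain ⟨f, rfl⟩ := hsurj b
    exact (m.mem_evalIdeal a M hM f).1 (h ▸ Submodule.mem_top)
  · have hker : ∀ f, m.polyEval a f = 0 → f ∈ J := fun f hf =>
      hJ.le ((m.mem_evalIdeal a M hM f).2 (hf ▸ M.zero_mem))
    have htop := hmax.2.2 _ (m.isSubalg_of_invariant hcyc (m.map_polyEval_invariant a J)) <| by
      refine lt_of_le_not_ge (fun b hb => ?_) fun hle => hJ.not_ge fun f hf => ?_
      · obtain ⟨f, rfl⟩ := hsurj b
        exact ⟨f, hJ.le ((m.mem_evalIdeal a M hM f).2 hb), rfl⟩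
      · exact (m.mem_evalIdeal a M hM f).2 (hle ⟨f, hf, rfl⟩)
    obtain ⟨f, hf, h1⟩ : m.polyEval a 1 ∈ (J.restrictScalars K).map (m.polyEval a) :=
      htop ▸ Submodule.mem_top
    have h1f : (1 : K[X]) - f ∈ J := hker _ (by rw [map_sub, h1, sub_self])
    exact J.eq_top_iff_one.2 (by simpa using J.add_mem h1f hf)

theorem polyEval_mem_map_span_iff [FiniteDimensional K A] (m : LeibnizMul K A) {a : A}
    (hcyc : m.subalgGen a = ⊤) {p : K[X]} (hp : p ∣ (m.mul a).charpoly) (f : K[X]) :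
    m.polyEval a f ∈ ((Ideal.span {p}).restrictScalars K).map (m.polyEval a) ↔ p ∣ f := by
  refine ⟨?_, fun h => ⟨f, Ideal.mem_span_singleton.2 h, rfl⟩⟩
  rintro ⟨g, hg, hgf⟩
  have hdvd := (m.polyEval_eq_zero_iff hcyc (f - g)).1 (by rw [map_sub, hgf, sub_self])
  exact (dvd_iff_dvd_of_dvd_sub (hp.trans hdvd)).2 (Ideal.mem_span_singleton.1 hg)

/-- Irreducible factors of the characteristic polynomial give maximal subalgebras. -/
theorem isMaxSubalg_map_span [FiniteDimensional K A] (m : LeibnizMul K A) {a : A}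
    (hcyc : m.subalgGen a = ⊤) {p : K[X]} (hirr : Irreducible p)
    (hp : p ∣ (m.mul a).charpoly) :
    m.IsMaxSubalg (((Ideal.span {p}).restrictScalars K).map (m.polyEval a)) := by
  set M := ((Ideal.span {p}).restrictScalars K).map (m.polyEval a)
  have hmem := m.polyEval_mem_map_span_iff hcyc hp
  have hsurj := m.polyEval_surjective hcyc
  have hinv : ∀ S : Submodule K A, (∀ x ∈ S, m.mul a x ∈ S) → M < S → S = ⊤ := by
    intro S hS hlt
    have hmaxp := PrincipalIdealRing.isMaximal_of_irreducible hirr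
    have htop : m.evalIdeal a S hS = ⊤ := by
      refine hmaxp.1.2 _ (lt_of_le_not_ge (fun f hf => hlt.le ⟨f, hf, rfl⟩) fun hle => ?_)
      refine hlt.not_ge fun b hb => ?_
      obtain ⟨f, rfl⟩ := hsurj b
      exact ⟨f, hle hb, rfl⟩
    rw [eq_top_iff]
    rintro b -
    obtain ⟨f, rfl⟩ := hsurj b
    exact (m.mem_evalIdeal a S hS f).1 (htop ▸ Submodule.mem_top)
  refine ⟨m.isSubalg_of_invariant hcyc (m.map_polyEval_invariant a _), fun h => ?_,
    fun S hS hlt => ?_⟩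
  · exact hirr.not_isUnit (isUnit_of_dvd_one ((hmem 1).1 (h.ge Submodule.mem_top)))
  · exact hinv S (hS.invariant m hcyc
      fun h => hinv _ (m.ker_mul_invariant hcyc) (hlt.trans h)) hlt

end LeibnizMul

/-- for a cyclic Leibniz algebra generated by `a` with
`charpoly(L_a) = p₁^{n₁} ⋯ p_s^{n_s}`, the Frattini subalgebra is the kernel of
`q(L_a)` where `q = p₁^{n₁-1} ⋯ p_s^{n_s-1}`. -/
theorem stmt9 {K A : Type*} [Field K] [AddCommGroup A] [Module K A] [FiniteDimensional K A]
    (m : LeibnizMul K A) (a : A) (hcyc : m.subalgGen a = ⊤)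
    (s : ℕ) (p : Fin s → Polynomial K) (e : Fin s → ℕ)
    (hirr : ∀ j, Irreducible (p j)) (hmonic : ∀ j, (p j).Monic)
    (hdist : Function.Injective p) (hpos : ∀ j, 1 ≤ e j)
    (hfact : LinearMap.charpoly (m.mul a) = ∏ j, p j ^ e j) :
    m.frattini =
      LinearMap.ker (Polynomial.aeval (m.mul a) (∏ j, p j ^ (e j - 1))) := by
  have hsurj := m.polyEval_surjective hcyc
  have hpP : ∀ j, p j ∣ (m.mul a).charpoly := fun j => by
    rw [hfact]
    exact (dvd_pow_self _ (Nat.one_le_iff_ne_zero.1 (hpos j))).trans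
      (Finset.dvd_prod_of_mem (fun j => p j ^ e j) (Finset.mem_univ j))
  have hsplit : (m.mul a).charpoly = (∏ j, p j ^ (e j - 1)) * ∏ j, p j := by
    rw [hfact, ← Finset.prod_mul_distrib]
    exact Finset.prod_congr rfl fun j _ =>
      (pow_sub_one_mul (Nat.one_le_iff_ne_zero.1 (hpos j)) _).symm
  have hq0 : (∏ j, p j ^ (e j - 1)) ≠ 0 :=
    Finset.prod_ne_zero_iff.2 fun j _ => pow_ne_zero _ (hirr j).ne_zero
  have hcop : Pairwise fun i j => IsCoprime (p i) (p j) := fun i j hij =>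
    (hirr i).coprime_iff_not_dvd.2 fun h => hij <| hdist <|
      eq_of_monic_of_associated (hmonic i) (hmonic j) ((hirr i).associated_of_dvd (hirr j) h)
  ext b
  obtain ⟨f, rfl⟩ := hsurj b
  have hkey : m.polyEval a f ∈ LinearMap.ker (aeval (m.mul a) (∏ j, p j ^ (e j - 1))) ↔
      ∏ j, p j ∣ f := by
    rw [LinearMap.mem_ker, ← m.polyEval_mul, m.polyEval_eq_zero_iff hcyc, hsplit,
      mul_dvd_mul_iff_left hq0]
  rw [hkey, LeibnizMul.frattini, Submodule.mem_sInf]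
  constructor
  · intro h
    exact Finset.prod_dvd_of_coprime (fun i _ j _ hij => hcop hij) fun j _ =>
      (m.polyEval_mem_map_span_iff hcyc (hpP j) f).1
        (h _ (m.isMaxSubalg_map_span hcyc (hirr j) (hpP j)))
  · intro h M hM
    have hinv := hM.1.invariant m hcyc
      (hM.2.2 _ (m.isSubalg_of_invariant hcyc (m.ker_mul_invariant hcyc)))
    have hprime := (hM.isMaximal_evalIdeal m hcyc hinv).isPrime
    have hP : ∏ j, p j ^ e j ∈ m.evalIdeal a M hinv := by
      rw [LeibnizMul.mem_evalIdeal, ← hfact, (m.polyEval_eq_zero_iff hcyc _).2 dvd_rfl]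
      exact M.zero_mem
    obtain ⟨j, -, hj⟩ := hprime.prod_mem_iff.1 hP
    exact Ideal.mem_of_dvd _ ((Finset.dvd_prod_of_mem p (Finset.mem_univ j)).trans h)
      (hprime.mem_of_pow_mem _ hj)
end

section
/- Let A be a finite-dimensional cyclic left Leibniz algebra generated by a, with p(x) the characteristic polynomial of left multiplication L_a. Then the Frattini subalgebra Φ(A) = 0 if and only if p(x) is a product of distinct irreducible factors (i.e., p is squarefree). -/
open Polynomial LinearMap

section CyclicEndomorphism

variable {K V : Type*} [Field K] [AddCommGroup V] [Module K V]

/-- An endomorphism with a cyclic vector has equal minimal and characteristic polynomials. -/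
theorem LinearMap.minpoly_eq_charpoly_of_cyclic [FiniteDimensional K V] (f : Module.End K V)
    (v : V) (hv : ∀ w, ∃ q : K[X], aeval f q v = w) : minpoly K f = f.charpoly := by
  have hmonic : (minpoly K f).Monic := minpoly.monic (Algebra.IsIntegral.isIntegral f)
  let φ : degreeLT K (minpoly K f).natDegree →ₗ[K] V :=
    (LinearMap.applyₗ v ∘ₗ (aeval f).toLinearMap) ∘ₗ (degreeLT K (minpoly K f).natDegree).subtype
  have hφ : Function.Surjective φ := fun w ↦ by
    obtain ⟨q, rfl⟩ := hv w
    refine ⟨⟨q %ₘ minpoly K f, ?_⟩, ?_⟩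
    · rw [mem_degreeLT, ← degree_eq_natDegree hmonic.ne_zero]
      exact degree_modByMonic_lt _ hmonic
    · change aeval f (q %ₘ minpoly K f) v = aeval f q v
      rw [aeval_modByMonic_eq_self_of_root (minpoly.aeval K f)]
  have hrank : Module.finrank K V ≤ (minpoly K f).natDegree := by
    have := (degreeLTEquiv K (minpoly K f).natDegree).symm.finiteDimensional
    simpa [(degreeLTEquiv K (minpoly K f).natDegree).finrank_eq] using
      LinearMap.finrank_le_finrank_of_surjective hφ
  exact (eq_of_monic_of_dvd_of_natDegree_le hmonic f.charpoly_monic f.minpoly_dvd_charpoly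
    (f.charpoly_natDegree.trans_le hrank)).symm

/-- An endomorphism of a finite-dimensional space is semisimple iff its minimal polynomial is
squarefree. -/
theorem Module.End.isSemisimple_iff_squarefree_minpoly [FiniteDimensional K V]
    (f : Module.End K V) : f.IsSemisimple ↔ Squarefree (minpoly K f) :=
  ⟨fun h ↦ h.minpoly_squarefree,
    fun h ↦ isSemisimple_of_squarefree_aeval_eq_zero h (minpoly.aeval K f)⟩

theorem Module.End.isSemisimple_iff_jacobson_eq_bot [FiniteDimensional K V]
    (f : Module.End K V) : f.IsSemisimple ↔ Module.jacobson K[X] (Module.AEval' f) = ⊥ := by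
  have : IsArtinian K (Module.AEval' f) :=
    inferInstanceAs (IsArtinian K V)
  have : IsArtinian K[X] (Module.AEval' f) := isArtinian_of_tower K this
  exact IsArtinian.isSemisimpleModule_iff_jacobson K[X] (Module.AEval' f)

end CyclicEndomorphism

namespace LeibnizMul

variable {K A : Type*} [Field K] [AddCommGroup A] [Module K A] (m : LeibnizMul K A) {a : A}

theorem eq_top_of_isSubalg_of_mem (hcyc : m.subalgGen a = ⊤) {S : Submodule K A}
    (hS : m.IsSubalg S) (ha : a ∈ S) : S = ⊤ :=
  top_le_iff.mp (hcyc ▸ sInf_le ⟨hS, ha⟩)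

theorem mul_mem_span_mul_generator (hcyc : m.subalgGen a = ⊤) (x : A) :
    ∃ c : K, m.mul x = c • m.mul a := by
  have h : (K ∙ m.mul a).comap m.mul = ⊤ := by
    refine m.eq_top_of_isSubalg_of_mem hcyc (fun x hx y hy ↦ ?_)
      (Submodule.mem_span_singleton_self _)
    obtain ⟨c, hc⟩ := Submodule.mem_span_singleton.mp hx
    obtain ⟨d, hd⟩ := Submodule.mem_span_singleton.mp hy
    have : m.mul (m.mul x y) = 0 := LinearMap.ext fun z ↦ by
      have := m.leibniz x y z
      simp only [← hc, ← hd, LinearMap.smul_apply, map_smul] at this ⊢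
      rw [smul_comm d c] at this
      simpa using this
    simp [this]
  obtain ⟨c, hc⟩ := Submodule.mem_span_singleton.mp (h.ge (Submodule.mem_top (x := x)))
  exact ⟨c, hc.symm⟩

theorem isSubalg_of_mem_invtSubmodule (hcyc : m.subalgGen a = ⊤) {S : Submodule K A}
    (hS : S ∈ Module.End.invtSubmodule (m.mul a)) : m.IsSubalg S := fun x _ y hy ↦ by
  obtain ⟨c, hc⟩ := m.mul_mem_span_mul_generator hcyc x
  rw [hc]
  exact S.smul_mem c (hS hy)

theorem range_mem_invtSubmodule :
    LinearMap.range (m.mul a) ∈ Module.End.invtSubmodule (m.mul a) :=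
  fun _ _ ↦ ⟨_, rfl⟩

theorem mul_mul_generator (hcyc : m.subalgGen a = ⊤) (x : A) : m.mul (m.mul a x) = 0 :=
  LinearMap.ext fun z ↦ by
    obtain ⟨c, hc⟩ := m.mul_mem_span_mul_generator hcyc x
    simpa [hc] using m.leibniz a x z

theorem exists_eq_smul_add_mul (hcyc : m.subalgGen a = ⊤) (x : A) :
    ∃ (c : K) (t : A), x = c • a + m.mul a t := by
  have h : (K ∙ a) ⊔ LinearMap.range (m.mul a) = ⊤ :=
    m.eq_top_of_isSubalg_of_mem hcyc
      (m.isSubalg_of_mem_invtSubmodule hcyc fun y _ ↦ Submodule.mem_sup_right ⟨y, rfl⟩)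
      (Submodule.mem_sup_left (Submodule.mem_span_singleton_self a))
  obtain ⟨y, hy, _, ⟨t, rfl⟩, rfl⟩ :=
    Submodule.mem_sup.mp (h.ge (Submodule.mem_top (x := x)))
  obtain ⟨c, rfl⟩ := Submodule.mem_span_singleton.mp hy
  exact ⟨c, t, rfl⟩

theorem IsSubalg.le_range_or_mem_invtSubmodule (hcyc : m.subalgGen a = ⊤) {S : Submodule K A}
    (hS : m.IsSubalg S) :
    S ≤ LinearMap.range (m.mul a) ∨ S ∈ Module.End.invtSubmodule (m.mul a) := by
  refine or_iff_not_imp_left.mpr fun h y hy ↦ ?_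
  obtain ⟨x, hx, hxr⟩ := SetLike.not_le_iff_exists.mp h
  obtain ⟨c, t, rfl⟩ := m.exists_eq_smul_add_mul hcyc x
  have hc : c ≠ 0 := by
    rintro rfl
    exact hxr ⟨t, by simp⟩
  have := hS _ hx y hy
  simp only [map_add, map_smul, m.mul_mul_generator hcyc, add_zero, LinearMap.smul_apply] at this
  exact (S.smul_mem_iff hc).mp this

theorem mem_invtSubmodule_of_range_eq_top (hcyc : m.subalgGen a = ⊤)
    (h : LinearMap.range (m.mul a) = ⊤) (S : Submodule K A) :
    S ∈ Module.End.invtSubmodule (m.mul a) := fun y _ ↦ by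
  obtain ⟨t, ht⟩ := LinearMap.range_eq_top.mp h a
  have := m.mul_mul_generator hcyc t
  rw [ht] at this
  simp [this]

/-- The maximal subalgebras are the maximal subspaces invariant under left multiplication by the
generator. -/
theorem isMaxSubalg_iff (hcyc : m.subalgGen a = ⊤) (M : Submodule K A) :
    m.IsMaxSubalg M ↔
      ∃ h : M ∈ Module.End.invtSubmodule (m.mul a),
        IsCoatom (⟨M, h⟩ : Module.End.invtSubmodule (m.mul a)) := by
  have hrange := m.isSubalg_of_mem_invtSubmodule hcyc (m.range_mem_invtSubmodule (a := a))
  constructor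
  · rintro ⟨hM, hne, hmax⟩
    have hinv : M ∈ Module.End.invtSubmodule (m.mul a) := by
      rcases hM.le_range_or_mem_invtSubmodule m hcyc with h | h
      · rcases h.eq_or_lt with h | h
        · exact h ▸ m.range_mem_invtSubmodule
        · exact m.mem_invtSubmodule_of_range_eq_top hcyc (hmax _ hrange h) M
      · exact h
    exact ⟨hinv, fun h ↦ hne (congrArg Subtype.val h), fun S hS ↦
      Subtype.ext (hmax S (m.isSubalg_of_mem_invtSubmodule hcyc S.2) hS)⟩
  · rintro ⟨hinv, hne, hmax⟩
    have htop : ∀ S ∈ Module.End.invtSubmodule (m.mul a), M < S → S = ⊤ := fun S hS hlt ↦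
      congrArg Subtype.val (hmax ⟨S, hS⟩ hlt)
    refine ⟨m.isSubalg_of_mem_invtSubmodule hcyc hinv, fun h ↦ hne (Subtype.ext h),
      fun S hS hlt ↦ htop S ?_ hlt⟩
    rcases hS.le_range_or_mem_invtSubmodule m hcyc with h | h
    · exact m.mem_invtSubmodule_of_range_eq_top hcyc
        (htop _ m.range_mem_invtSubmodule (hlt.trans_le h)) S
    · exact h

theorem mem_frattini_iff (hcyc : m.subalgGen a = ⊤) (x : A) :
    x ∈ m.frattini ↔
      Module.AEval'.of (m.mul a) x ∈ Module.jacobson K[X] (Module.AEval' (m.mul a)) := by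
  let e := Module.AEval.mapSubmodule K A (m.mul a)
  simp only [frattini, Module.jacobson, Submodule.mem_sInf, Set.mem_ofPred_eq,
    m.isMaxSubalg_iff hcyc]
  constructor
  · intro h N hN
    exact h (e.symm N) ⟨(e.symm N).2, (e.symm.isCoatom_iff N).mpr hN⟩
  · rintro h M ⟨hM, hcoatom⟩
    exact (Module.AEval.mem_mapSubmodule_apply K A (m.mul a)).mp (h (e ⟨M, hM⟩) ((e.isCoatom_iff _).mpr hcoatom))

theorem frattini_eq_bot_iff_jacobson (hcyc : m.subalgGen a = ⊤) :
    m.frattini = ⊥ ↔ Module.jacobson K[X] (Module.AEval' (m.mul a)) = ⊥ := by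
  simp only [Submodule.eq_bot_iff, m.mem_frattini_iff hcyc]
  rw [(Module.AEval'.of (m.mul a)).surjective.forall]
  simp

theorem exists_aeval_generator (hcyc : m.subalgGen a = ⊤) (w : A) :
    ∃ q : K[X], aeval (m.mul a) q a = w := by
  let φ : K[X] →ₗ[K] A := LinearMap.applyₗ a ∘ₗ (aeval (R := K) (m.mul a)).toLinearMap
  have h : LinearMap.range φ = ⊤ := by
    refine m.eq_top_of_isSubalg_of_mem hcyc (m.isSubalg_of_mem_invtSubmodule hcyc ?_)
      ⟨1, by simp [φ]⟩
    rintro _ ⟨q, rfl⟩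
    exact ⟨X * q, by simp [φ]⟩
  exact LinearMap.range_eq_top.mp h w

end LeibnizMul

/-- for a cyclic Leibniz algebra generated by `a`, the Frattini
subalgebra is zero iff the characteristic polynomial of `L_a` is squarefree. -/
theorem stmt10 {K A : Type*} [Field K] [AddCommGroup A] [Module K A] [FiniteDimensional K A]
    (m : LeibnizMul K A) (a : A) (hcyc : m.subalgGen a = ⊤) :
    m.frattini = ⊥ ↔ Squarefree (LinearMap.charpoly (m.mul a)) := by
  rw [m.frattini_eq_bot_iff_jacobson hcyc, ← Module.End.isSemisimple_iff_jacobson_eq_bot,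
    Module.End.isSemisimple_iff_squarefree_minpoly,
    LinearMap.minpoly_eq_charpoly_of_cyclic _ a (m.exists_aeval_generator hcyc)]
end

section
/- Let A be a nilpotent non-abelian finite-dimensional left Leibniz algebra whose center Z(A) = {z ∈ A : zA = Az = 0} is one-dimensional. Then there is no nilpotent left Leibniz algebra N and integer i ≥ 2 such that A is isomorphic to N^i (as an ideal with its induced structure), where N^i is the i-th term of the lower central series of N. -/
open Polynomial LinearMap

namespace LeibnizMul

variable {K A : Type*} [Field K] [AddCommGroup A] [Module K A] (m : LeibnizMul K A)

theorem mul_mem_lcsIn_succ (x : A) {k : ℕ} {y : A} (hy : y ∈ m.lcsIn ⊤ k) :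
    m.mul x y ∈ m.lcsIn ⊤ (k + 1) :=
  Submodule.subset_span ⟨x, Submodule.mem_top, y, hy, rfl⟩

theorem mul_mem_lcsIn_add {a b : ℕ} {x y : A} (hx : x ∈ m.lcsIn ⊤ a) (hy : y ∈ m.lcsIn ⊤ b) :
    m.mul x y ∈ m.lcsIn ⊤ (a + b + 1) := by
  induction a generalizing b x y with
  | zero => simpa using m.mul_mem_lcsIn_succ x hy
  | succ a ih =>
    have hle : m.lcsIn ⊤ (a + 1) ≤ (m.lcsIn ⊤ (a + 1 + b + 1)).comap (m.mul.flip y) := by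
      refine Submodule.span_le.2 ?_
      rintro _ ⟨u, -, v, hv, rfl⟩
      have h₁ := m.mul_mem_lcsIn_succ u (ih hv hy)
      have h₂ := ih hv (m.mul_mem_lcsIn_succ u hy)
      have h₃ : m.mul (m.mul u v) y = m.mul u (m.mul v y) - m.mul v (m.mul u y) :=
        eq_sub_of_add_eq (m.leibniz u v y).symm
      rw [show a + b + 1 + 1 = a + 1 + b + 1 by omega] at h₁
      rw [show a + (b + 1) + 1 = a + 1 + b + 1 by omega] at h₂
      simpa [h₃] using sub_mem h₁ h₂
    exact hle hx

theorem lcsIn_top_antitone : Antitone (m.lcsIn ⊤) := by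
  refine antitone_nat_of_succ_le fun n => ?_
  induction n with
  | zero => exact le_top
  | succ n ih => exact Submodule.span_mono (Set.image2_subset_left ih)

theorem mul_mem_lcsIn_succ_left {k : ℕ} {x : A} (hx : x ∈ m.lcsIn ⊤ k) (y : A) :
    m.mul x y ∈ m.lcsIn ⊤ (k + 1) :=
  m.mul_mem_lcsIn_add (b := 0) hx Submodule.mem_top

variable {m}

/-- In a nilpotent algebra, an endomorphism moving each term of the lower central series into the
next one has no nonzero eigenvalue. -/
theorem IsNilpotent.apply_eq_zero_of_eq_smul (hm : m.IsNilpotent) (f : A →ₗ[K] A)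
    (hf : ∀ k, ∀ v ∈ m.lcsIn ⊤ k, f v ∈ m.lcsIn ⊤ (k + 1)) {v : A} {c : K} (hv : f v = c • v) :
    f v = 0 := by
  by_cases hc : c = 0
  · simp [hv, hc]
  obtain ⟨n, hn⟩ := hm
  have hmem : ∀ k, v ∈ m.lcsIn ⊤ k := by
    intro k
    induction k with
    | zero => exact Submodule.mem_top
    | succ k ih =>
      have h := hf k v ih
      rwa [hv, Submodule.smul_mem_iff _ hc] at h
  have hv0 : v = 0 := by simpa [hn] using hmem n
  simp [hv0]

/-- If the center of `N^(j+2)` is spanned by one vector, then `N^(j+2)` annihilates `N` from the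
left. -/
theorem IsNilpotent.mul_eq_zero_of_center_le_span (hm : m.IsNilpotent) (j : ℕ) {z : A}
    (hzJ : z ∈ m.lcsIn ⊤ (j + 1))
    (hz : ∀ w ∈ m.lcsIn ⊤ (j + 1), m.mul z w = 0 ∧ m.mul w z = 0)
    (hspan : ∀ w ∈ m.lcsIn ⊤ (j + 1),
      (∀ y ∈ m.lcsIn ⊤ (j + 1), m.mul w y = 0 ∧ m.mul y w = 0) → ∃ c : K, w = c • z)
    {x : A} (hx : x ∈ m.lcsIn ⊤ (j + 1)) (y : A) : m.mul x y = 0 := by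
  have hl : ∀ (u : A) {w : A}, w ∈ m.lcsIn ⊤ (j + 1) → m.mul u w ∈ m.lcsIn ⊤ (j + 1) :=
    fun u w hw => m.lcsIn_top_antitone (Nat.le_succ _) (m.mul_mem_lcsIn_succ u hw)
  have hr : ∀ (u : A) {w : A}, w ∈ m.lcsIn ⊤ (j + 1) → m.mul w u ∈ m.lcsIn ⊤ (j + 1) :=
    fun u w hw => m.lcsIn_top_antitone (Nat.le_succ _) (m.mul_mem_lcsIn_succ_left hw u)
  have hNz : ∀ u, m.mul u z = 0 := by
    intro u
    obtain ⟨c, hc⟩ := hspan _ (hl u hzJ) fun w hw => by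
      have h₁ := m.leibniz u z w
      have h₂ := m.leibniz w u z
      simp only [(hz w hw).1, (hz w hw).2, (hz _ (hl u hw)).1, (hz _ (hr u hw)).2, map_zero,
        add_zero] at h₁ h₂
      exact ⟨h₁.symm, h₂⟩
    exact hm.apply_eq_zero_of_eq_smul (m.mul u) (fun k v hv => m.mul_mem_lcsIn_succ u hv) hc
  have hzN : ∀ u, m.mul z u = 0 := by
    intro u
    obtain ⟨c, hc⟩ := hspan _ (hr u hzJ) fun w hw => by
      have h₁ := m.leibniz z u w
      have h₂ := m.leibniz w z u
      simp only [(hz w hw).1, (hz w hw).2, (hz _ (hl u hw)).1, (hz _ (hr u hw)).1, map_zero,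
        add_zero, LinearMap.zero_apply] at h₁ h₂
      exact ⟨h₁.symm, h₂⟩
    exact hm.apply_eq_zero_of_eq_smul (m.mul.flip u)
      (fun k v hv => m.mul_mem_lcsIn_succ_left hv u) hc
  have hdesc : ∀ k, m.lcsIn ⊤ (j + 1 + k + 1) ≤ Submodule.span K {z} →
      m.lcsIn ⊤ (j + 1 + k) ≤ Submodule.span K {z} := by
    intro k hk w hw
    have hsmul : ∀ v ∈ m.lcsIn ⊤ (j + 1 + k + 1), ∀ u, m.mul u v = 0 ∧ m.mul v u = 0 := by
      intro v hv u
      obtain ⟨c, rfl⟩ := Submodule.mem_span_singleton.1 (hk hv)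
      simp [hNz, hzN]
    have huw := fun u => hsmul _ (m.mul_mem_lcsIn_succ u hw)
    have hwu := fun u => hsmul _ (m.mul_mem_lcsIn_succ_left hw u)
    have hsq : m.lcsIn ⊤ 1 ≤ LinearMap.ker (m.mul w) ⊓ LinearMap.ker (m.mul.flip w) := by
      refine Submodule.span_le.2 ?_
      rintro _ ⟨u, -, v, -, rfl⟩
      have h₁ := m.leibniz w u v
      have h₂ := m.leibniz u v w
      simp only [(huw _ _).1, (hwu _ _).1, (hwu _ _).2, add_zero] at h₁ h₂
      exact ⟨by simpa using h₁, by simpa using h₂.symm⟩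
    obtain ⟨c, rfl⟩ := hspan w (m.lcsIn_top_antitone (Nat.le_add_right _ _) hw) fun v hv => by
      simpa using hsq (m.lcsIn_top_antitone (Nat.le_add_left 1 j) hv)
    exact Submodule.smul_mem _ _ (Submodule.mem_span_singleton_self z)
  have hJ : m.lcsIn ⊤ (j + 1) ≤ Submodule.span K {z} := by
    obtain ⟨n, hn⟩ := hm
    have hn' : m.lcsIn ⊤ (j + 1 + n) ≤ Submodule.span K {z} :=
      (m.lcsIn_top_antitone (Nat.le_add_left _ _)).trans (hn.trans_le bot_le)
    clear hn
    induction n with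
    | zero => exact hn'
    | succ n ih => exact ih (hdesc n hn')
  obtain ⟨c, rfl⟩ := Submodule.mem_span_singleton.1 (hJ hx)
  simp [hzN]

theorem mem_centerIn_top {z : A} :
    z ∈ m.centerIn ⊤ ↔ ∀ x, m.mul z x = 0 ∧ m.mul x z = 0 := by
  simp [centerIn, Submodule.mem_iInf]

end LeibnizMul

/-- a nilpotent non-abelian Leibniz algebra with one-dimensional center
is not isomorphic to `N^i`, `i ≥ 2`, for any nilpotent Leibniz algebra `N`.
(`lcsIn mN ⊤ (i-1) = N^i`.) -/
theorem stmt16 {K A : Type*} [Field K] [AddCommGroup A] [Module K A] [FiniteDimensional K A]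
    (m : LeibnizMul K A) (hnil : m.IsNilpotent) (hnonab : m.mulSub ⊤ ⊤ ≠ ⊥)
    (hz : Module.finrank K ↥(m.centerIn ⊤) = 1) :
    ∀ (N : Type*) [AddCommGroup N] [Module K N] (mN : LeibnizMul K N),
      mN.IsNilpotent → ∀ i : ℕ, 2 ≤ i →
        ¬ ∃ e : A →ₗ[K] N, Function.Injective e ∧
            LinearMap.range e = mN.lcsIn ⊤ (i - 1) ∧
            ∀ x y, e (m.mul x y) = mN.mul (e x) (e y) := by
  rintro N _ _ mN hN i hi ⟨e, hinj, hrange, hmul⟩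
  obtain ⟨j, rfl⟩ := Nat.exists_eq_add_of_le' hi
  rw [show j + 2 - 1 = j + 1 by omega] at hrange
  obtain ⟨⟨z, hzc⟩, -, hz1⟩ := finrank_eq_one_iff'.1 hz
  rw [LeibnizMul.mem_centerIn_top] at hzc
  refine hnonab (Submodule.span_eq_bot.2 ?_)
  rintro _ ⟨x, -, y, -, rfl⟩
  have hmem : ∀ a, e a ∈ mN.lcsIn ⊤ (j + 1) := fun a => hrange ▸ LinearMap.mem_range_self e a
  have hker := (injective_iff_map_eq_zero e).1 hinj
  refine hker _ ?_
  rw [hmul]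
  refine hN.mul_eq_zero_of_center_le_span j (hmem z) ?_ ?_ (hmem x) _
  · rw [← hrange]
    rintro _ ⟨a, rfl⟩
    simp [← hmul, hzc a]
  · rw [← hrange]
    rintro _ ⟨a, rfl⟩ ha
    have hac : a ∈ m.centerIn ⊤ := LeibnizMul.mem_centerIn_top.2 fun b => by
      have hb := ha (e b) ⟨b, rfl⟩
      rw [← hmul, ← hmul] at hb
      exact ⟨hker _ hb.1, hker _ hb.2⟩
    obtain ⟨c, hc⟩ := hz1 ⟨a, hac⟩
    exact ⟨c, by rw [← map_smul]; exact congrArg e (congrArg Subtype.val hc).symm⟩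
end

section
/- Let A be a left Leibniz algebra that is an ideal of a left Leibniz algebra L. Then each term Z_j(A) of the upper central series of A is an ideal of L. -/
open Polynomial LinearMap

theorem LeibnizMul.mem_relCentralizer {K A : Type*} [Field K] [AddCommGroup A] [Module K A]
    {m : LeibnizMul K A} {S T : Submodule K A} {z : A} :
    z ∈ m.relCentralizer S T ↔ z ∈ S ∧ ∀ x ∈ S, m.mul z x ∈ T ∧ m.mul x z ∈ T := by
  simp [LeibnizMul.relCentralizer, Submodule.mem_iInf]

/-- if `B` is an ideal of the Leibniz algebra `L`, then each term of the
upper central series of `B` is an ideal of `L`. -/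
theorem stmt18 {K L : Type*} [Field K] [AddCommGroup L] [Module K L]
    (m : LeibnizMul K L) (B : Submodule K L) (hB : m.IsIdeal B) :
    ∀ j : ℕ, m.IsIdeal (m.ucsIn B j) := by
  intro j
  induction j with
  | zero =>
    intro x z hz
    rw [(Submodule.mem_bot K).1 hz]
    simp
  | succ j ih =>
    intro x z hz
    obtain ⟨hzB, hz⟩ := LeibnizMul.mem_relCentralizer.1 hz
    refine ⟨LeibnizMul.mem_relCentralizer.2 ⟨(hB x z hzB).1, fun b hb => ⟨?_, ?_⟩⟩,
      LeibnizMul.mem_relCentralizer.2 ⟨(hB x z hzB).2, fun b hb => ⟨?_, ?_⟩⟩⟩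
    · rw [eq_sub_of_add_eq (m.leibniz x z b).symm]
      exact sub_mem (ih x _ (hz b hb).1).1 (hz _ (hB x b hb).1).1
    · rw [m.leibniz b x z]
      exact add_mem (hz _ (hB x b hb).2).2 (ih x _ (hz b hb).2).1
    · rw [eq_sub_of_add_eq (m.leibniz z x b).symm]
      exact sub_mem (hz _ (hB x b hb).1).1 (ih x _ (hz b hb).1).1
    · rw [m.leibniz b z x]
      exact add_mem (ih x _ (hz b hb).2).2 (hz _ (hB x b hb).2).1
end

section
/- Let B be a nilpotent finite-dimensional left Leibniz algebra with dim B ≥ 2 whose right center R₁(B) = {r ∈ B : Br = 0} is one-dimensional. Then B cannot be an ideal of any left Leibniz algebra A with B contained in the Frattini subalgebra Φ(A). -/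
open Polynomial LinearMap

namespace LeibnizMul

variable {K A B : Type*} [Field K] [AddCommGroup A] [Module K A] [AddCommGroup B] [Module K B]

lemma mem_rightCenter {m : LeibnizMul K A} {r : A} :
    r ∈ m.rightCenter ↔ ∀ x, m.mul x r = 0 := by
  simp [rightCenter, LinearMap.ext_iff]

/-- The second right center `{r : A·r ⊆ R₁(A)}`. -/
def secondRightCenter (m : LeibnizMul K A) : Submodule K A :=
  ⨅ x : A, m.rightCenter.comap (m.mul x)

lemma mem_secondRightCenter {m : LeibnizMul K A} {r : A} :
    r ∈ m.secondRightCenter ↔ ∀ x, m.mul x r ∈ m.rightCenter := by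
  simp [secondRightCenter]

/-- In a nilpotent algebra the right centers grow strictly until they exhaust the algebra. -/
lemma IsNilpotent.rightCenter_eq_top {m : LeibnizMul K A} (hnil : m.IsNilpotent)
    (h : m.secondRightCenter ≤ m.rightCenter) : m.rightCenter = ⊤ := by
  obtain ⟨n, hn⟩ := hnil
  have key : ∀ n, m.lcsIn ⊤ n ≤ m.rightCenter → m.rightCenter = ⊤ := by
    intro n
    induction n with
    | zero => exact fun h => top_le_iff.1 h
    | succ n ih =>
      refine fun hle => ih fun y hy => h (mem_secondRightCenter.2 fun x => hle ?_)
      exact Submodule.subset_span ⟨x, Submodule.mem_top, y, hy, rfl⟩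
  exact key n (hn ▸ bot_le)

/-- A proper subalgebra supplementing a finite-dimensional subspace lies in a maximal one. -/
lemma IsSubalg.exists_le_isMaxSubalg [FiniteDimensional K B] {m : LeibnizMul K A}
    {e : B →ₗ[K] A} {M : Submodule K A} (hM : m.IsSubalg M) (hne : M ≠ ⊤)
    (hsup : ∀ a, ∃ b, a - e b ∈ M) : ∃ N, m.IsMaxSubalg N ∧ M ≤ N := by
  obtain ⟨N, ⟨hN, hNne, hMN⟩, hmax⟩ :=
    (InvImage.wf (fun S : Submodule K A => S.comap e)
      (wellFounded_gt (α := Submodule K B))).has_min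
      {S | m.IsSubalg S ∧ S ≠ ⊤ ∧ M ≤ S} ⟨M, hM, hne, le_rfl⟩
  refine ⟨N, ⟨hN, hNne, fun T hT hNT => ?_⟩, hMN⟩
  by_contra hTne
  have hcomap : T.comap e ≤ N.comap e := by
    by_contra hle
    exact hmax T ⟨hT, hTne, hMN.trans hNT.le⟩
      (lt_of_le_not_ge (Submodule.comap_mono hNT.le) hle)
  refine hNT.not_ge fun t ht => ?_
  obtain ⟨b, hb⟩ := hsup t
  have hbT : e b ∈ T := by
    simpa using T.sub_mem ht (hNT.le (hMN hb))
  simpa using N.add_mem (hMN hb) (hcomap hbT)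

/-- Left multiplication of an algebra on an ideal, as a bilinear map. -/
lemma IsIdeal.exists_leftAction {m : LeibnizMul K A} {e : B →ₗ[K] A}
    (he : Function.Injective e) (hI : m.IsIdeal (LinearMap.range e)) :
    ∃ ρ : A →ₗ[K] B →ₗ[K] B, ∀ a b, e (ρ a b) = m.mul a (e b) := by
  choose ρ hρ using fun a b => (hI a (e b) ⟨b, rfl⟩).1
  refine ⟨LinearMap.mk₂ K ρ ?_ ?_ ?_ ?_, hρ⟩ <;> intros <;> apply he <;> simp [hρ]

/-- The functionals `w ↦ f (b·w)` on a complement of the right center in the second right center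
exhaust the dual space, if the right center is spanned by `r` and `f r = 1`. -/
lemma exists_mul_eq_dual [FiniteDimensional K B] {m : LeibnizMul K B} {r : B} {f : B →ₗ[K] K}
    (hspan : m.rightCenter ≤ Submodule.span K {r}) (hf : f r = 1)
    (φ : ↥(m.secondRightCenter ⊓ LinearMap.ker f) →ₗ[K] K) :
    ∃ b, ∀ w : ↥(m.secondRightCenter ⊓ LinearMap.ker f), f (m.mul b w) = φ w := by
  have hzero : ∀ x ∈ m.rightCenter, f x = 0 → x = 0 := by
    intro x hx hfx
    obtain ⟨c, rfl⟩ := Submodule.mem_span_singleton.1 (hspan hx)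
    have : c = 0 := by simpa [hf] using hfx
    simp [this]
  let β : B →ₗ[K] ↥(m.secondRightCenter ⊓ LinearMap.ker f) →ₗ[K] K :=
    LinearMap.mk₂ K (fun b w => f (m.mul b w))
      (by simp) (by simp) (by simp) (by simp)
  have hinj : Function.Injective β.flip := by
    refine (injective_iff_map_eq_zero _).2 fun w hw => Subtype.ext ?_
    refine hzero _ (mem_rightCenter.2 fun b => ?_) w.2.2
    exact hzero _ (mem_secondRightCenter.1 w.2.1 b) (LinearMap.congr_fun hw b)
  obtain ⟨b, hb⟩ := (LinearMap.flip_injective_iff₂.1 hinj) φ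
  exact ⟨b, fun w => LinearMap.congr_fun hb w⟩

end LeibnizMul

/-- a nilpotent Leibniz algebra `B` with `dim B ≥ 2` and one-dimensional
right center cannot be an ideal of any Leibniz algebra `A` with `B ⊆ Φ(A)`. -/
theorem stmt19 {K B : Type*} [Field K] [AddCommGroup B] [Module K B] [FiniteDimensional K B]
    (mB : LeibnizMul K B) (hnil : mB.IsNilpotent)
    (hdim : 2 ≤ Module.finrank K B)
    (hr : Module.finrank K ↥mB.rightCenter = 1) :
    ∀ (A : Type*) [AddCommGroup A] [Module K A] (mA : LeibnizMul K A),
      ¬ ∃ e : B →ₗ[K] A, Function.Injective e ∧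
          (∀ x y, e (mB.mul x y) = mA.mul (e x) (e y)) ∧
          mA.IsIdeal (LinearMap.range e) ∧
          LinearMap.range e ≤ mA.frattini := by
  rintro A _ _ mA ⟨e, he, hmul, hI, hfrat⟩
  obtain ⟨ρ, hρ⟩ := hI.exists_leftAction he
  have hρe : ∀ x y, ρ (e x) y = mB.mul x y := fun x y => he (by rw [hρ, hmul])
  have hρmul : ∀ a b y, ρ (mA.mul a b) y = ρ a (ρ b y) - ρ b (ρ a y) := by
    intro a b y
    apply he
    simp [hρ, mA.leibniz a b]
  have hcomm : ∀ a x, ∃ z, ∀ y, mB.mul x (ρ a y) = mB.mul z y + ρ a (mB.mul x y) := by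
    intro a x
    obtain ⟨z, hz⟩ := (hI a (e x) ⟨x, rfl⟩).2
    refine ⟨z, fun y => he ?_⟩
    simp [hρ, hmul, hz, mA.leibniz (e x) a]
  have hR₁ : ∀ a, ∀ y ∈ mB.rightCenter, ρ a y ∈ mB.rightCenter := by
    intro a y hy
    rw [LeibnizMul.mem_rightCenter] at hy ⊢
    intro x
    obtain ⟨z, hz⟩ := hcomm a x
    simp [hz, hy]
  have hR₂ : ∀ a, ∀ y ∈ mB.secondRightCenter, ρ a y ∈ mB.secondRightCenter := by
    intro a y hy
    rw [LeibnizMul.mem_secondRightCenter] at hy ⊢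
    intro x
    obtain ⟨z, hz⟩ := hcomm a x
    rw [hz]
    exact add_mem (hy z) (hR₁ a _ (hy x))
  obtain ⟨⟨r, hr₁⟩, hr₀, hspan⟩ := finrank_eq_one_iff'.1 hr
  have hr₀ : r ≠ 0 := fun h => hr₀ (Subtype.ext h)
  have hspan : mB.rightCenter ≤ Submodule.span K {r} := fun x hx => by
    obtain ⟨c, hc⟩ := hspan ⟨x, hx⟩
    exact Submodule.mem_span_singleton.2 ⟨c, congrArg Subtype.val hc⟩
  obtain ⟨f, hf⟩ := Module.Projective.exists_dual_eq_one K hr₀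
  set W : Submodule K B := mB.secondRightCenter ⊓ LinearMap.ker f
  let M : Submodule K A := ⨅ w : W, LinearMap.ker (f ∘ₗ ρ.flip w)
  have hmemM : ∀ a, a ∈ M ↔ ∀ w ∈ W, f (ρ a w) = 0 := by simp [M]
  have hM : mA.IsSubalg M := by
    intro a ha b hb
    rw [hmemM] at ha hb ⊢
    intro w hw
    rw [hρmul, map_sub, ha _ ⟨hR₂ b w hw.1, hb w hw⟩, hb _ ⟨hR₂ a w hw.1, ha w hw⟩, sub_zero]
  have hdual := LeibnizMul.exists_mul_eq_dual hspan hf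
  have hsup : ∀ a, ∃ b, a - e b ∈ M := by
    intro a
    obtain ⟨b, hb⟩ := hdual (f ∘ₗ ρ a ∘ₗ W.subtype)
    refine ⟨b, (hmemM _).2 fun w hw => ?_⟩
    simp [hρe, hb ⟨w, hw⟩]
  obtain ⟨u, hu₂, hu₁⟩ : ∃ u ∈ mB.secondRightCenter, u ∉ mB.rightCenter := by
    by_contra! h
    have := hnil.rightCenter_eq_top h
    rw [this, finrank_top] at hr
    omega
  have hrR₂ : r ∈ mB.secondRightCenter := LeibnizMul.mem_secondRightCenter.2 fun x => by
    simp [LeibnizMul.mem_rightCenter.1 hr₁ x]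
  have hwW : u - f u • r ∈ W :=
    ⟨sub_mem hu₂ (Submodule.smul_mem _ _ hrR₂), by simp [hf]⟩
  have hw₀ : (⟨_, hwW⟩ : W) ≠ 0 := fun h => hu₁ <| by
    rw [sub_eq_zero.1 (congrArg Subtype.val h)]
    exact Submodule.smul_mem _ _ hr₁
  have hne : M ≠ ⊤ := by
    intro htop
    obtain ⟨φ, hφ⟩ := Module.Projective.exists_dual_ne_zero K hw₀
    obtain ⟨b, hb⟩ := hdual φ
    refine hφ ?_
    rw [← hb, ← hρe]
    exact (hmemM (e b)).1 (htop ▸ Submodule.mem_top) _ hwW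
  obtain ⟨N, hN, hMN⟩ := hM.exists_le_isMaxSubalg hne hsup
  refine hN.2.1 (top_le_iff.1 fun a _ => ?_)
  obtain ⟨b, hb⟩ := hsup a
  simpa using N.add_mem (hMN hb) (sInf_le (a := N) hN (hfrat ⟨b, rfl⟩))
end
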